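/- arXiv:2206.02401 — 2 statements merged into one kernel-verified Lean document; each statement's English description precedes it below -/
import Mathlib

section
/- Let k be a field and T a noetherian k-scheme. Suppose that for every nonempty reduced closed subscheme T′ ⊆ T there are given a scheme V_{T′}, a proper morphism g_{T′} : V_{T′} → T′ ×_k 𝔸¹_k, and a dense open subscheme U_{T′} ⊆ T′ such that the base change of g_{T′} over U_{T′} ×_k 𝔸¹_k is an isomorphism. Then there exist a natural number N and a strictly decreasing chain of reduced closed subschemes T_red = T₀ ⊋ T₁ ⊋ ⋯ ⊋ T_N = ∅, where T_{i+1} is the complement T_i ∖ U_{T_i} with its reduced structure, such that the finite family of composite morphisms { V_{T_i} → T_i ×_k 𝔸¹_k ↪ T ×_k 𝔸¹_k }_{0 ≤ i < N} is a cdp-covering of T ×_k 𝔸¹_k: the induced morphism ⨿_{0≤i<N} V_{T_i} → T ×_k 𝔸¹_k is proper, and every point y of T ×_k 𝔸¹_k has a preimage x in some V_{T_i} whose residue field extension k(x)/k(y) is an isomorphism. -/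
open CategoryTheory CategoryTheory.Limits AlgebraicGeometry TopologicalSpace Opposite

universe u

noncomputable section

variable (k : Type u) [Field k]

/-- The affine line over `k`, mapping to `Spec k`. -/
def affLineMap : Spec (CommRingCat.of (Polynomial k)) ⟶ Spec (CommRingCat.of k) :=
  Spec.map (CommRingCat.ofHom (algebraMap k (Polynomial k)))

/-- The product `W ×ₖ 𝔸¹ₖ` of a `k`-scheme `W` with the affine line. -/
def prodA1 {W : Scheme.{u}} (wk : W ⟶ Spec (CommRingCat.of k)) : Scheme.{u} :=
  pullback wk (affLineMap k)

/-- The morphism `W' ×ₖ 𝔸¹ₖ → W ×ₖ 𝔸¹ₖ` induced by a morphism of `k`-schemes. -/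
def prodA1Map {W' W : Scheme.{u}} {w'k : W' ⟶ Spec (CommRingCat.of k)}
    {wk : W ⟶ Spec (CommRingCat.of k)} (h : W' ⟶ W) (hc : h ≫ wk = w'k) :
    prodA1 k w'k ⟶ prodA1 k wk :=
  pullback.map w'k (affLineMap k) wk (affLineMap k) h (𝟙 _) (𝟙 _)
    (by simp [hc]) (by simp)

lemma isReduced_subscheme_vanishingIdeal {X : Scheme.{u}} (C : Closeds X) :
    IsReduced (Scheme.IdealSheafData.vanishingIdeal C).subscheme := by
  have (U : X.affineOpens) : IsReduced
      ((Scheme.IdealSheafData.vanishingIdeal C).subschemeCover.openCover.X U) := by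
    change IsReduced (Spec (.of (_ ⧸ (Scheme.IdealSheafData.vanishingIdeal C).ideal U)))
    rw [affine_isReduced_iff]
    rw [Scheme.IdealSheafData.vanishingIdeal_ideal]
    exact (Ideal.isRadical_iff_quotient_reduced _).mp
      (PrimeSpectrum.isRadical_vanishingIdeal _)
  exact @IsReduced.of_openCover _
    (Scheme.IdealSheafData.vanishingIdeal C).subschemeCover.openCover this

lemma exists_isReduced_range_eq {X : Scheme.{u}} (C : Closeds X) :
    ∃ (Z : Scheme.{u}) (i : Z ⟶ X), IsClosedImmersion i ∧ IsReduced Z ∧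
      Set.range i = (C : Set X) :=
  ⟨_, (Scheme.IdealSheafData.vanishingIdeal C).subschemeι, inferInstance,
    isReduced_subscheme_vanishingIdeal C, by simp⟩

lemma isIso_residueFieldMap_of_isClosedImmersion {X Y : Scheme.{u}} (f : X ⟶ Y)
    [IsClosedImmersion f] (x : X) : IsIso (f.residueFieldMap x) := by
  rw [ConcreteCategory.isIso_iff_bijective]
  refine ⟨(f.residueFieldMap x).hom.injective, ?_⟩
  have h : Function.Surjective (Y.residue (f x) ≫ f.residueFieldMap x).hom := by
    rw [Scheme.residue_residueFieldMap, CommRingCat.hom_comp]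
    exact (X.residue_surjective x).comp (f.stalkMap_surjective x)
  rw [CommRingCat.hom_comp, RingHom.coe_comp] at h
  exact Function.Surjective.of_comp h

lemma exists_sigmaι_eq {σ : Type*} [Small.{u} σ] {Y : σ → Scheme.{u}} (x : (∐ Y : Scheme.{u})) :
    ∃ (j : σ) (y : Y j), Sigma.ι Y j y = x :=
  (sigmaOpenCover Y).exists_eq x

instance isClosedImmersion_sigmaι {σ : Type*} [Small.{u} σ] (Y : σ → Scheme.{u}) (i : σ) :
    IsClosedImmersion (Sigma.ι Y i) := by
  refine .of_isPreimmersion _ ?_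
  have : Set.range (Sigma.ι Y i) = (⋃ j ∈ {j | j ≠ i}, Set.range (Sigma.ι Y j))ᶜ := by
    ext x
    obtain ⟨j, y, rfl⟩ := exists_sigmaι_eq x
    simp only [ne_eq, Set.mem_ofPred_eq, Set.mem_range, Set.mem_compl_iff, Set.mem_iUnion,
      exists_prop, sigmaι_eq_iff]
    refine ⟨fun ⟨_, h⟩ ⟨_, hk, _, h'⟩ ↦ hk (congrArg Sigma.fst (h'.trans h.symm)), fun h ↦ ?_⟩
    obtain rfl : j = i := by_contra fun hj ↦ h ⟨j, hj, y, rfl⟩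
    exact ⟨y, rfl⟩
  rw [this, isClosed_compl_iff]
  exact isOpen_biUnion fun j _ ↦ (Sigma.ι Y j).isOpenEmbedding.isOpen_range

lemma isSeparated_sigmaDesc {σ : Type*} [Small.{u} σ] [Finite σ] {X : Scheme.{u}}
    {Y : σ → Scheme.{u}} (f : ∀ i, Y i ⟶ X) [∀ i, IsSeparated (f i)] : IsSeparated (Sigma.desc f) := by
  constructor
  refine .of_isPreimmersion _ ?_
  have h (i) : Sigma.ι Y i ≫ pullback.diagonal (Sigma.desc f) =
      pullback.diagonal (f i) ≫ pullback.map (f i) (f i) (Sigma.desc f) (Sigma.desc f)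
        (Sigma.ι Y i) (Sigma.ι Y i) (𝟙 _) (by simp) (by simp) := by
    apply pullback.hom_ext <;> simp [pullback.map, pullback.lift_fst, pullback.lift_snd]
  have : MorphismProperty.IsMultiplicative @IsClosedImmersion.{u} := inferInstance
  have : MorphismProperty.IsStableUnderComposition @IsClosedImmersion.{u} :=
    this.toIsStableUnderComposition
  have hc (i) : IsClosedImmersion (Sigma.ι Y i ≫ pullback.diagonal (Sigma.desc f)) := by
    rw [h]
    have : IsClosedImmersion (pullback.map (f i) (f i) (Sigma.desc f) (Sigma.desc f)
        (Sigma.ι Y i) (Sigma.ι Y i) (𝟙 _) (by simp) (by simp)) :=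
      MorphismProperty.pullbackMap (P := @IsClosedImmersion)
        (isClosedImmersion_sigmaι Y i) (isClosedImmersion_sigmaι Y i) (by simp) (by simp)
    infer_instance
  have : Set.range (pullback.diagonal (Sigma.desc f)) =
      ⋃ i, Set.range (Sigma.ι Y i ≫ pullback.diagonal (Sigma.desc f)) := by
    ext z
    simp only [Set.mem_range, Set.mem_iUnion]
    constructor
    · rintro ⟨x, rfl⟩
      obtain ⟨j, y, rfl⟩ := exists_sigmaι_eq x
      exact ⟨j, y, by simp⟩
    · rintro ⟨i, y, rfl⟩
      exact ⟨Sigma.ι Y i y, by simp⟩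
  rw [this]
  exact isClosed_iUnion_of_finite fun i ↦ (Scheme.Hom.isClosedEmbedding _).isClosed_range

lemma universallyClosed_sigmaDesc {σ : Type*} [Small.{u} σ] [Finite σ] {X : Scheme.{u}}
    {Y : σ → Scheme.{u}} (f : ∀ i, Y i ⟶ X) [∀ i, UniversallyClosed (f i)] :
    UniversallyClosed (Sigma.desc f) := by
  constructor
  intro P X' fst g snd H C hC
  have h (i) : IsPullback (pullback.fst fst (Sigma.ι Y i) ≫ snd)
      (pullback.snd fst (Sigma.ι Y i)) g (f i) := by
    have := (IsPullback.of_hasPullback fst (Sigma.ι Y i)).paste_horiz H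
    simpa using this
  have hu (i) : UniversallyClosed (pullback.fst fst (Sigma.ι Y i) ≫ snd) :=
    MorphismProperty.of_isPullback (P := @UniversallyClosed) (h i).flip inferInstance
  have : snd '' C = ⋃ i, (pullback.fst fst (Sigma.ι Y i) ≫ snd) ''
      (pullback.fst fst (Sigma.ι Y i) ⁻¹' C) := by
    ext z
    simp only [Set.mem_image, Set.mem_iUnion]
    constructor
    · rintro ⟨p, hp, rfl⟩
      obtain ⟨j, y, hy⟩ := exists_sigmaι_eq (fst p)
      obtain ⟨q, rfl, -⟩ := Scheme.Pullback.exists_preimage_pullback p y hy.symm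
      exact ⟨j, q, hp, by simp⟩
    · rintro ⟨i, q, hq, rfl⟩
      exact ⟨_, hq, by simp⟩
  rw [this]
  exact isClosed_iUnion_of_finite fun i ↦
    (Scheme.Hom.isClosedMap _) _ (hC.preimage (Scheme.Hom.continuous _))

lemma isProper_sigmaDesc {σ : Type*} [Small.{u} σ] [Finite σ] {X : Scheme.{u}}
    {Y : σ → Scheme.{u}} (f : ∀ i, Y i ⟶ X) [∀ i, IsProper (f i)] :
    IsProper (Sigma.desc f) := by
  have := isSeparated_sigmaDesc f
  have := universallyClosed_sigmaDesc f
  have : LocallyOfFiniteType (Sigma.desc f) := by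
    have : IsZariskiLocalAtSource @LocallyOfFiniteType.{u} :=
      HasRingHomProperty.instIsZariskiLocalAtSource (Q := RingHom.FiniteType)
    exact IsZariskiLocalAtSource.sigmaDesc (P := @LocallyOfFiniteType.{u}) (f := f) inferInstance
  constructor

/-- The projection `W ×ₖ 𝔸¹ₖ → W`. -/
def prodA1Fst {W : Scheme.{u}} (wk : W ⟶ Spec (CommRingCat.of k)) : prodA1 k wk ⟶ W :=
  pullback.fst wk (affLineMap k)

/-- The projection `W ×ₖ 𝔸¹ₖ → 𝔸¹ₖ`. -/
def prodA1Snd {W : Scheme.{u}} (wk : W ⟶ Spec (CommRingCat.of k)) :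
    prodA1 k wk ⟶ Spec (CommRingCat.of (Polynomial k)) :=
  pullback.snd wk (affLineMap k)

lemma isPullback_prodA1 {W : Scheme.{u}} (wk : W ⟶ Spec (CommRingCat.of k)) :
    IsPullback (prodA1Snd k wk) (prodA1Fst k wk) (affLineMap k) wk :=
  (IsPullback.of_hasPullback wk (affLineMap k)).flip

lemma isPullback_prodA1Map {W' W : Scheme.{u}} {w'k : W' ⟶ Spec (CommRingCat.of k)}
    {wk : W ⟶ Spec (CommRingCat.of k)} (h : W' ⟶ W) (hc : h ≫ wk = w'k) :
    IsPullback (prodA1Map k h hc) (prodA1Fst k w'k) (prodA1Fst k wk) h := by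
  subst hc
  have hsnd : prodA1Map k h rfl ≫ prodA1Snd k wk = prodA1Snd k (h ≫ wk) :=
    (pullback.lift_snd _ _ _).trans (Category.comp_id _)
  have hfst : prodA1Map k h rfl ≫ prodA1Fst k wk = prodA1Fst k (h ≫ wk) ≫ h :=
    pullback.lift_fst _ _ _
  refine IsPullback.of_right ?_ hfst (isPullback_prodA1 k wk)
  rw [hsnd]
  exact isPullback_prodA1 k (h ≫ wk)

/-- A point of `T ×ₖ 𝔸¹ₖ` lying over a locus `U ⊆ Z ⊆ T` over which `g` is an isomorphism
lifts along `g` without changing the residue field. -/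
lemma exists_isIso_residueFieldMap {T Z V : Scheme.{u}} (tk : T ⟶ Spec (CommRingCat.of k))
    (i : Z ⟶ T) [IsClosedImmersion i] (g : V ⟶ prodA1 k (i ≫ tk)) (U : Z.Opens)
    [IsIso (pullback.snd g (prodA1Map k U.ι (wk := i ≫ tk) rfl))]
    (y : (prodA1 k tk : Scheme.{u})) (z : Z) (hz : z ∈ U) (hzy : i z = prodA1Fst k tk y) :
    ∃ x : V, (g ≫ prodA1Map k i rfl) x = y ∧
      IsIso ((g ≫ prodA1Map k i (wk := tk) rfl).residueFieldMap x) := by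
  have hi := isPullback_prodA1Map k (wk := tk) i rfl
  have hU := isPullback_prodA1Map k (wk := i ≫ tk) U.ι rfl
  obtain ⟨y', rfl, hy'⟩ := Scheme.exists_preimage_of_isPullback hi y z hzy.symm
  obtain ⟨y'', rfl, -⟩ := Scheme.exists_preimage_of_isPullback hU y' ⟨z, hz⟩ hy'
  have : IsClosedImmersion (prodA1Map k i (wk := tk) rfl) :=
    MorphismProperty.of_isPullback (P := @IsClosedImmersion) hi.flip inferInstance
  have : IsOpenImmersion (prodA1Map k U.ι (wk := i ≫ tk) rfl) :=
    MorphismProperty.of_isPullback (P := @IsOpenImmersion) hU.flip inferInstance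
  set c := prodA1Map k U.ι (wk := i ≫ tk) rfl
  set l := inv (pullback.snd g c) ≫ pullback.fst g c with hl
  have hlg : l ≫ g = c := by simp [hl, pullback.condition]
  have hx : g (l y'') = c y'' := by rw [← Scheme.Hom.comp_apply, hlg]
  refine ⟨l y'', ?_, ?_⟩
  · rw [Scheme.Hom.comp_apply, hx]
  · have h₁ : IsIso (g.residueFieldMap (l y'')) := by
      have h : IsIso ((l ≫ g).residueFieldMap y'') := by rw [hlg]; infer_instance
      rw [Scheme.residueFieldMap_comp] at h
      have : IsOpenImmersion l := by rw [hl]; infer_instance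
      exact @IsIso.of_isIso_comp_right _ _ _ _ _ (g.residueFieldMap (l y''))
        (l.residueFieldMap y'') inferInstance h
    rw [Scheme.residueFieldMap_comp]
    have := isIso_residueFieldMap_of_isClosedImmersion (prodA1Map k i (wk := tk) rfl) (g (l y''))
    exact IsIso.comp_isIso' this h₁

/-- A reduced closed subscheme of `T`. -/
structure ReducedClosedSubscheme (T : Scheme.{u}) where
  /-- The underlying scheme. -/
  carrier : Scheme.{u}
  /-- The inclusion. -/
  incl : carrier ⟶ T
  isClosedImmersion : IsClosedImmersion incl
  isReduced : IsReduced carrier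

namespace ReducedClosedSubscheme

variable {T : Scheme.{u}}

/-- The underlying closed subset of a reduced closed subscheme. -/
def closeds (S : ReducedClosedSubscheme T) : Closeds T :=
  ⟨Set.range S.incl, have := S.isClosedImmersion; S.incl.isClosedEmbedding.isClosed_range⟩

lemma exists_surjective (T : Scheme.{u}) :
    ∃ S : ReducedClosedSubscheme T, Function.Surjective S.incl := by
  obtain ⟨Z, i, h₁, h₂, h⟩ := exists_isReduced_range_eq (X := T) ⊤
  exact ⟨⟨Z, i, h₁, h₂⟩, Set.range_eq_univ.mp (by simpa using h)⟩

lemma exists_complement (S : ReducedClosedSubscheme T) (U : S.carrier.Opens) :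
    ∃ (S' : ReducedClosedSubscheme T) (e : S'.carrier ⟶ S.carrier), IsClosedImmersion e ∧
      e ≫ S.incl = S'.incl ∧ Set.range e = (U : Set S.carrier)ᶜ := by
  have := S.isClosedImmersion
  obtain ⟨Z, e, h₁, h₂, h⟩ := exists_isReduced_range_eq (X := S.carrier) U.compl
  exact ⟨⟨Z, e ≫ S.incl, inferInstance, h₂⟩, e, h₁, rfl, by simpa using h⟩

lemma mem_of_notMem_range {S S' : ReducedClosedSubscheme T} {U : Set S.carrier}
    {e : S'.carrier ⟶ S.carrier} (he : e ≫ S.incl = S'.incl) (hr : Set.range e = Uᶜ)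
    {z : S.carrier} (hz : S.incl z ∉ Set.range S'.incl) : z ∈ U := by
  by_contra h
  obtain ⟨w, rfl⟩ : z ∈ Set.range e := hr ▸ h
  exact hz ⟨w, by rw [← he, Scheme.Hom.comp_apply]⟩

lemma range_ssubset {S S' : ReducedClosedSubscheme T} {U : Set S.carrier}
    {e : S'.carrier ⟶ S.carrier} (he : e ≫ S.incl = S'.incl) (hr : Set.range e = Uᶜ)
    (hU : U.Nonempty) : Set.range S'.incl ⊂ Set.range S.incl := by
  have := S.isClosedImmersion
  obtain ⟨z, hz⟩ := hU
  refine ⟨?_, fun h ↦ ?_⟩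
  · rintro _ ⟨w, rfl⟩
    exact ⟨e w, by rw [← he, Scheme.Hom.comp_apply]⟩
  · obtain ⟨w, hw⟩ := h ⟨z, rfl⟩
    rw [← he, Scheme.Hom.comp_apply] at hw
    have hwz : z ∈ Set.range e := ⟨w, S.incl.isClosedEmbedding.injective hw⟩
    rw [hr] at hwz
    exact hwz hz

end ReducedClosedSubscheme

/-- Let `k` be a field and `T` a noetherian `k`-scheme.  Suppose that for
every nonempty reduced closed subscheme `T′ ⊆ T` we are given a scheme `V_{T′}`, a proper
morphism `g_{T′} : V_{T′} → T′ ×ₖ 𝔸¹ₖ`, and a dense open `U_{T′} ⊆ T′` over which `g_{T′}`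
becomes an isomorphism.  Then there are `N : ℕ` and a strictly decreasing chain of reduced
closed subschemes `T_red = T₀ ⊋ T₁ ⊋ ⋯ ⊋ T_N = ∅`, with `T_{i+1}` the complement
`T_i ∖ U_{T_i}` with its reduced structure, such that the family of composites
`V_{T_i} → T_i ×ₖ 𝔸¹ₖ → T ×ₖ 𝔸¹ₖ` is a cdp-covering of `T ×ₖ 𝔸¹ₖ`: the induced morphism
from the coproduct is proper, and every point of `T ×ₖ 𝔸¹ₖ` has a preimage in some `V_{T_i}`
inducing an isomorphism of residue fields. -/
theorem stmt1 (T : Scheme.{u}) [IsNoetherian T] (tk : T ⟶ Spec (CommRingCat.of k))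
    -- the given data, for every nonempty reduced closed subscheme `Z ⊆ T`:
    (V : ∀ (Z : Scheme.{u}) (i : Z ⟶ T), IsClosedImmersion i → IsReduced Z → Nonempty Z →
      Scheme.{u})
    (g : ∀ Z i h₁ h₂ h₃, V Z i h₁ h₂ h₃ ⟶ prodA1 k (i ≫ tk))
    (hgproper : ∀ Z i h₁ h₂ h₃, IsProper (g Z i h₁ h₂ h₃))
    (U : ∀ (Z : Scheme.{u}) (i : Z ⟶ T), IsClosedImmersion i → IsReduced Z → Nonempty Z →
      Z.Opens)
    (hUdense : ∀ (Z : Scheme.{u}) (i : Z ⟶ T) (h₁ : IsClosedImmersion i)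
      (h₂ : IsReduced Z) (h₃ : Nonempty Z),
      Dense ((U Z i h₁ h₂ h₃ : Opens Z) : Set Z))
    -- the base change of `g` over `U ×ₖ 𝔸¹ₖ` is an isomorphism:
    (hUiso : ∀ (Z : Scheme.{u}) (i : Z ⟶ T) (h₁ : IsClosedImmersion i)
      (h₂ : IsReduced Z) (h₃ : Nonempty Z),
      IsIso (pullback.snd (g Z i h₁ h₂ h₃)
        (prodA1Map k (U Z i h₁ h₂ h₃).ι (by rfl)))) :
    ∃ (N : ℕ) (Z : Fin (N + 1) → Scheme.{u}) (ι : ∀ j, Z j ⟶ T)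
      (hcl : ∀ j, IsClosedImmersion (ι j)) (hred : ∀ j, IsReduced (Z j)),
      -- `T₀` is the reduction `T_red` of `T`:
      Function.Surjective (ι 0).base ∧
      -- `T_N = ∅`:
      IsEmpty (Z (Fin.last N)) ∧
      -- the chain is strictly decreasing, each `T_i` for `i < N` being nonempty, and
      -- `T_{i+1}` is the complement of `U_{T_i}` with its reduced structure:
      ∃ (hne : ∀ j : Fin N, Nonempty (Z j.castSucc))
        (e : ∀ j : Fin N, Z j.succ ⟶ Z j.castSucc),
        (∀ j : Fin N, IsClosedImmersion (e j)) ∧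
        (∀ j : Fin N, e j ≫ ι j.castSucc = ι j.succ) ∧
        (∀ j : Fin N, Set.range (e j).base =
          ((U (Z j.castSucc) (ι j.castSucc) (hcl _) (hred _) (hne j) :
            Opens (Z j.castSucc)) : Set (Z j.castSucc))ᶜ) ∧
        (∀ j : Fin N, Set.range (ι j.succ).base ⊂ Set.range (ι j.castSucc).base) ∧
        -- the composite morphisms `V_{T_i} → T_i ×ₖ 𝔸¹ₖ → T ×ₖ 𝔸¹ₖ` :
        ∀ m : ∀ j : Fin N, V (Z j.castSucc) (ι j.castSucc) (hcl _) (hred _) (hne j) ⟶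
            prodA1 k tk,
          (∀ j : Fin N, m j = g (Z j.castSucc) (ι j.castSucc) (hcl _) (hred _) (hne j) ≫
            prodA1Map k (ι j.castSucc) rfl) →
          -- they form a cdp-covering of `T ×ₖ 𝔸¹ₖ`:
          IsProper (Sigma.desc m) ∧
          ∀ y : (prodA1 k tk : Scheme.{u}),
            ∃ (j : Fin N) (x : V (Z j.castSucc) (ι j.castSucc) (hcl _) (hred _) (hne j)),
              (m j).base x = y ∧ IsIso ((m j).residueFieldMap x) := by
  obtain ⟨S₀, hS₀⟩ := ReducedClosedSubscheme.exists_surjective T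
  have key (S : ReducedClosedSubscheme T) : ∃ S' : ReducedClosedSubscheme T,
      ∀ h : Nonempty S.carrier, ∃ e : S'.carrier ⟶ S.carrier, IsClosedImmersion e ∧
        e ≫ S.incl = S'.incl ∧ Set.range e =
          ((U S.carrier S.incl S.isClosedImmersion S.isReduced h : Opens S.carrier) :
            Set S.carrier)ᶜ := by
    by_cases h : Nonempty S.carrier
    · obtain ⟨S', hS'⟩ := S.exists_complement
        (U S.carrier S.incl S.isClosedImmersion S.isReduced h)
      exact ⟨S', fun _ ↦ hS'⟩
    · exact ⟨S, fun h' ↦ (h h').elim⟩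
  choose next hnext using key
  let s : ℕ → ReducedClosedSubscheme T := fun n ↦ Nat.rec S₀ (fun _ S ↦ next S) n
  have hs (n : ℕ) (h : Nonempty (s n).carrier) :
      ∃ e : (s (n + 1)).carrier ⟶ (s n).carrier, IsClosedImmersion e ∧
        e ≫ (s n).incl = (s (n + 1)).incl ∧ Set.range e =
          ((U (s n).carrier (s n).incl (s n).isClosedImmersion (s n).isReduced h :
            Opens (s n).carrier) : Set (s n).carrier)ᶜ := hnext (s n) h
  have hlt (n : ℕ) (h : Nonempty (s n).carrier) :
      Set.range (s (n + 1)).incl ⊂ Set.range (s n).incl := by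
    obtain ⟨e, -, he, hr⟩ := hs n h
    exact ReducedClosedSubscheme.range_ssubset he hr (hUdense _ _ _ _ h).nonempty
  have hterm : ∃ n, IsEmpty (s n).carrier := by
    by_contra! hcon
    exact (RelEmbedding.natGT (fun n ↦ (s n).closeds) fun n ↦ hlt n (hcon n)).not_wellFounded
      (wellFounded_lt (α := Closeds T))
  classical
  have hne (j : Fin (Nat.find hterm)) : Nonempty (s j).carrier :=
    not_isEmpty_iff.mp (Nat.find_min hterm j.2)
  choose e he hcomp hrange using fun j : Fin (Nat.find hterm) ↦ hs j (hne j)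
  refine ⟨Nat.find hterm, fun j ↦ (s j).carrier, fun j ↦ (s j).incl,
    fun j ↦ (s j).isClosedImmersion, fun j ↦ (s j).isReduced, hS₀, Nat.find_spec hterm,
    hne, e, he, hcomp, hrange, fun j ↦ hlt j (hne j), fun m hm ↦ ⟨?_, fun y ↦ ?_⟩⟩
  · have (j : Fin (Nat.find hterm)) : IsProper (m j) := by
      rw [hm]
      have := (s j).isClosedImmersion
      have : IsClosedImmersion (prodA1Map k (s j).incl (wk := tk) rfl) :=
        MorphismProperty.of_isPullback (P := @IsClosedImmersion)
          (isPullback_prodA1Map k (wk := tk) (s j).incl rfl).flip inferInstance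
      have := hgproper (s j).carrier (s j).incl (s j).isClosedImmersion (s j).isReduced (hne j)
      exact inferInstanceAs (IsProper (g (s j).carrier (s j).incl _ _ (hne j) ≫
        prodA1Map k (s j).incl (wk := tk) rfl))
    exact isProper_sigmaDesc m
  · obtain ⟨n, hnN, ⟨z, hz⟩, hn'⟩ : ∃ n < Nat.find hterm,
        prodA1Fst k tk y ∈ Set.range (s n).incl ∧
        prodA1Fst k tk y ∉ Set.range (s (n + 1)).incl := by
      by_contra! hcon
      have hmem (n : ℕ) (hn : n ≤ Nat.find hterm) :
          prodA1Fst k tk y ∈ Set.range (s n).incl := by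
        induction n with
        | zero => exact hS₀ _
        | succ n ih => exact hcon n hn (ih (Nat.le_of_succ_le hn))
      obtain ⟨z, -⟩ := hmem _ le_rfl
      exact (Nat.find_spec hterm).elim z
    have := (s n).isClosedImmersion
    have := hUiso (s n).carrier (s n).incl (s n).isClosedImmersion (s n).isReduced (hne ⟨n, hnN⟩)
    obtain ⟨x, hx, hx'⟩ := exists_isIso_residueFieldMap k tk (s n).incl
      (g _ _ (s n).isClosedImmersion (s n).isReduced (hne ⟨n, hnN⟩)) _ y z
      (ReducedClosedSubscheme.mem_of_notMem_range (hcomp ⟨n, hnN⟩) (hrange ⟨n, hnN⟩)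
        (hz ▸ hn')) hz
    refine ⟨⟨n, hnN⟩, x, ?_⟩
    rw [hm]
    exact ⟨hx, hx'⟩
end
end

section
/- Fix a field k and a noetherian separated base scheme S over k, and let T be a separated S-scheme of finite type. Let (V_i)_{1≤i≤n} be a principal Mdf-sequence over T and let (W_i)_{1≤i≤n} be an arbitrary Mdf-sequence over T of the same length n. Then there exists an Mdf-sequence (V′_i)_{1≤i≤n} over T together with morphisms of Mdf-sequences (V′_i) → (V_i) and (V′_i) → (W_i) such that the induced morphism V′_{i,∞} → W_{i,∞} is surjective for every 1 ≤ i ≤ n. -/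
open CategoryTheory CategoryTheory.Limits AlgebraicGeometry TopologicalSpace Opposite

universe u

noncomputable section

variable (k : Type u) [Field k]

/-- The curve `□ := ℙ¹ ∖ {1} ≅ 𝔸¹` over `k`, modelled as the affine line `Spec k[t]`. -/
def boxScheme : Scheme.{u} := Spec (CommRingCat.of (Polynomial k))

/-- The structure morphism `□ → Spec k`. -/
def boxToSpec : boxScheme k ⟶ Spec (CommRingCat.of k) :=
  Spec.map (CommRingCat.ofHom (algebraMap k (Polynomial k)))

/-- The marked `k`-rational point `∞ ∈ □` (under the isomorphism `□ ≅ 𝔸¹` we take the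
rational point cut out by `t = 0`). -/
def inftyMap : Spec (CommRingCat.of k) ⟶ boxScheme k :=
  Spec.map (CommRingCat.ofHom (Polynomial.evalRingHom (0 : k)))

/-- The generic point `η` of `□`, i.e. the spectrum of the function field `k(t)`. -/
def genMap : Spec (CommRingCat.of (FractionRing (Polynomial k))) ⟶ boxScheme k :=
  Spec.map (CommRingCat.ofHom (algebraMap (Polynomial k) (FractionRing (Polynomial k))))

variable (S : Scheme.{u}) (sk : S ⟶ Spec (CommRingCat.of k))

/-- An Mdf-sequence of length `n` over `T` (relative to the base `S` over `k`):
a family `(V₁, …, Vₙ)` where `V_{0,∞} = T` and each `Vᵢ` is a separated `S`-scheme of finite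
type equipped with a proper morphism `Vᵢ → V_{i−1,∞} ×ₖ □`.  Here the flat part
`(Vᵢ)_fl ⊆ Vᵢ` — the scheme-theoretic closure of the generic fiber of `Vᵢ → □`, i.e. the
closed subscheme through which the generic fiber factors scheme-theoretically dominantly —
is recorded as part of the data, and `V_{i,∞} := (Vᵢ)_fl ×_□ {∞}` is recorded via a pullback
square. -/
structure MdfSeq (n : ℕ) (T : Scheme.{u}) (tS : T ⟶ S) : Type (u + 1) where
  /-- the schemes `V_{i,∞}`, with `V_{0,∞} = T` -/
  Vinf : Fin (n + 1) → Scheme.{u}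
  VinfS : ∀ i, Vinf i ⟶ S
  base_eq : Vinf 0 = T
  baseS_eq : VinfS 0 = eqToHom base_eq ≫ tS
  /-- the schemes `Vᵢ`, separated and of finite type over `S` -/
  V : Fin n → Scheme.{u}
  VS : ∀ i, V i ⟶ S
  VSsep : ∀ i, IsSeparated (VS i)
  VSlft : ∀ i, LocallyOfFiniteType (VS i)
  VSqc : ∀ i, QuasiCompact (VS i)
  /-- the proper structure morphisms `Vᵢ → V_{i−1,∞} ×ₖ □` -/
  g : ∀ i : Fin n, V i ⟶ pullback (VinfS i.castSucc ≫ sk) (boxToSpec k)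
  gS : ∀ i : Fin n, g i ≫ pullback.fst _ _ ≫ VinfS i.castSucc = VS i
  gproper : ∀ i, IsProper (g i)
  /-- the flat part `(Vᵢ)_fl`: a closed subscheme … -/
  Vfl : Fin n → Scheme.{u}
  ι : ∀ i, Vfl i ⟶ V i
  ιclosed : ∀ i, IsClosedImmersion (ι i)
  /-- … through which the generic fiber of `Vᵢ → □` factors … -/
  lift : ∀ i : Fin n, pullback (g i ≫ pullback.snd _ _) (genMap k) ⟶ Vfl i
  lift_comm : ∀ i : Fin n, lift i ≫ ι i = pullback.fst _ _
  /-- … scheme-theoretically dominantly (`O_{V_fl}` injects into the pushforward). -/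
  lift_dom : ∀ (i : Fin n) (U : (Vfl i).Opens), Function.Injective ((lift i).app U)
  /-- the fiber at infinity: `V_{i,∞} = (Vᵢ)_fl ×_□ {∞}` -/
  pr₁ : ∀ i : Fin n, Vinf i.succ ⟶ Vfl i
  pr₂ : ∀ i : Fin n, Vinf i.succ ⟶ Spec (CommRingCat.of k)
  isPB : ∀ i : Fin n,
    IsPullback (pr₁ i) (pr₂ i) (ι i ≫ g i ≫ pullback.snd _ _) (inftyMap k)
  VinfS_succ : ∀ i : Fin n, VinfS i.succ = pr₁ i ≫ ι i ≫ VS i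

/-- An Mdf-sequence is principal if all its structure morphisms are surjective. -/
def MdfSeq.Principal {n : ℕ} {T : Scheme.{u}} {tS : T ⟶ S} (A : MdfSeq k S sk n T tS) :
    Prop :=
  ∀ i : Fin n, Function.Surjective (A.g i).base

/-- A morphism of Mdf-sequences over `T`: morphisms `Vᵢ′ → Vᵢ` over `□`, compatible with the
structure morphisms via the induced morphisms `V′_{i−1,∞} → V_{i−1,∞}` (which are themselves
induced on the fibers at infinity by the maps of flat parts). -/
structure MdfHom {n : ℕ} {T : Scheme.{u}} {tS : T ⟶ S} (A B : MdfSeq k S sk n T tS) :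
    Type u where
  ψ : ∀ i, A.Vinf i ⟶ B.Vinf i
  ψS : ∀ i, ψ i ≫ B.VinfS i = A.VinfS i
  ψ0 : ψ 0 = eqToHom (A.base_eq.trans B.base_eq.symm)
  φ : ∀ i, A.V i ⟶ B.V i
  φfl : ∀ i, A.Vfl i ⟶ B.Vfl i
  φfl_comm : ∀ i, φfl i ≫ B.ι i = A.ι i ≫ φ i
  comm_fst : ∀ i : Fin n,
    φ i ≫ B.g i ≫ pullback.fst _ _ = A.g i ≫ pullback.fst _ _ ≫ ψ i.castSucc
  comm_snd : ∀ i : Fin n,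
    φ i ≫ B.g i ≫ pullback.snd _ _ = A.g i ≫ pullback.snd _ _
  ψ_pr₁ : ∀ i : Fin n, ψ i.succ ≫ B.pr₁ i = A.pr₁ i ≫ φfl i
  ψ_pr₂ : ∀ i : Fin n, ψ i.succ ≫ B.pr₂ i = A.pr₂ i

section FlatPart

/-- The corestriction of a quasi-compact morphism to its scheme-theoretic image is injective on
sections over every open subset. -/
lemma toImage_app_injective_opens {X Y : Scheme.{u}} (f : X ⟶ Y) [QuasiCompact f]
    (U : f.image.Opens) : Function.Injective (f.toImage.app U) :=
  TopCat.Presheaf.app_injective_of_stalkFunctor_map_injective (F := f.image.sheaf) f.toImage.c U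
    fun x _ ↦ f.stalkFunctor_toImage_injective x

lemma isSchemeTheoreticallyDominant_of_app_injective {X Y : Scheme.{u}} (f : X ⟶ Y)
    [QuasiCompact f] (h : ∀ U : Y.Opens, Function.Injective (f.app U)) :
    IsSchemeTheoreticallyDominant f := by
  refine ⟨?_⟩
  ext U : 2
  rw [f.ker_apply U]
  exact (RingHom.injective_iff_ker_eq_bot _).mp (h U)

variable {V V' B F G : Scheme.{u}} {f : V ⟶ B} {f' : V' ⟶ B} {η : G ⟶ B}
  {φ : V' ⟶ V} {ι : F ⟶ V} {l : pullback f η ⟶ F}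

lemma ker_le_ker_imageι_comp [QuasiCompact η] (hφ : φ ≫ f = f') (hl : l ≫ ι = pullback.fst f η) :
    ι.ker ≤ ((pullback.fst f' η).imageι ≫ φ).ker := by
  have := isSchemeTheoreticallyDominant_of_app_injective (pullback.fst f' η).toImage
    (toImage_app_injective_opens _)
  have hker : ((pullback.fst f' η).imageι ≫ φ).ker = (pullback.fst f' η ≫ φ).ker := by
    conv_rhs => rw [← (pullback.fst f' η).toImage_imageι, Category.assoc]
    rw [Scheme.Hom.ker_comp (pullback.fst f' η).toImage, (pullback.fst f' η).toImage.ker_eq_bot,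
      Scheme.IdealSheafData.map_bot]
  have hfac : pullback.fst f' η ≫ φ =
      (pullback.lift (pullback.fst f' η ≫ φ) (pullback.snd f' η)
        (by rw [Category.assoc, hφ, pullback.condition]) ≫ l) ≫ ι := by
    rw [Category.assoc, hl, pullback.lift_fst]
  rw [hker, hfac]
  exact Scheme.Hom.le_ker_comp _ _

/-- Functoriality of the closure of the generic fibre. -/
def flatLift [QuasiCompact η] [IsClosedImmersion ι] (hφ : φ ≫ f = f')
    (hl : l ≫ ι = pullback.fst f η) : (pullback.fst f' η).image ⟶ F :=
  IsClosedImmersion.lift ι ((pullback.fst f' η).imageι ≫ φ) (ker_le_ker_imageι_comp hφ hl)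

lemma flatLift_comp [QuasiCompact η] [IsClosedImmersion ι] (hφ : φ ≫ f = f')
    (hl : l ≫ ι = pullback.fst f η) :
    flatLift hφ hl ≫ ι = (pullback.fst f' η).imageι ≫ φ :=
  IsClosedImmersion.lift_fac _ _ _

lemma isProper_flatLift [QuasiCompact η] [IsClosedImmersion ι] [IsProper φ] (hφ : φ ≫ f = f')
    (hl : l ≫ ι = pullback.fst f η) : IsProper (flatLift hφ hl) := by
  have : IsProper (flatLift hφ hl ≫ ι) := by
    rw [flatLift_comp]
    infer_instance
  exact IsProper.of_comp _ ι

lemma surjective_flatLift [QuasiCompact η] [IsClosedImmersion ι] [IsProper φ] [Surjective φ]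
    (hφ : φ ≫ f = f') (hl : l ≫ ι = pullback.fst f η)
    (hdom : ∀ U : F.Opens, Function.Injective (l.app U)) : Surjective (flatLift hφ hl) := by
  have : QuasiCompact (l ≫ ι) := by
    rw [hl]
    infer_instance
  have : QuasiCompact l := .of_comp l ι
  have := isSchemeTheoreticallyDominant_of_app_injective l hdom
  have := isProper_flatLift hφ hl
  let q : pullback f' η ⟶ pullback f η :=
    pullback.lift (pullback.fst f' η ≫ φ) (pullback.snd f' η)
      (by rw [Category.assoc, hφ, pullback.condition])
  have hq : IsPullback q (pullback.fst f' η) (pullback.fst f η) φ := by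
    refine IsPullback.of_right (h₁₂ := pullback.snd f η) (h₂₂ := f) (v₁₃ := η) ?_
      (pullback.lift_fst _ _ _) (IsPullback.of_hasPullback f η).flip
    rw [pullback.lift_snd, hφ]
    exact (IsPullback.of_hasPullback f' η).flip
  have : Surjective q := MorphismProperty.of_isPullback hq.flip ‹Surjective φ›
  have hfac : (pullback.fst f' η).toImage ≫ flatLift hφ hl = q ≫ l := by
    rw [← cancel_mono ι, Category.assoc, flatLift_comp, Scheme.Hom.toImage_imageι_assoc,
      Category.assoc, hl, pullback.lift_fst]
  have : IsDominant ((pullback.fst f' η).toImage ≫ flatLift hφ hl) := by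
    rw [hfac]
    infer_instance
  have := IsDominant.of_comp (pullback.fst f' η).toImage (flatLift hφ hl)
  exact surjective_of_isDominant_of_isClosed_range _ (flatLift hφ hl).isClosedMap.isClosed_range

end FlatPart

instance : QuasiCompact (genMap k) :=
  inferInstanceAs (QuasiCompact (Spec.map (CommRingCat.ofHom
    (algebraMap (Polynomial k) (FractionRing (Polynomial k))))))

/-- A scheme `X` over `S` with compatible morphisms to `V_{i,∞}` and `W_{i,∞}`, the second one
proper and surjective. -/
structure MdfRefinement {n : ℕ} {T : Scheme.{u}} {tS : T ⟶ S} (A W : MdfSeq k S sk n T tS)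
    (i : Fin (n + 1)) : Type (u + 1) where
  X : Scheme.{u}
  XS : X ⟶ S
  toLeft : X ⟶ A.Vinf i
  toRight : X ⟶ W.Vinf i
  toLeft_comp : toLeft ≫ A.VinfS i = XS
  toRight_comp : toRight ≫ W.VinfS i = XS
  isProper_toRight : IsProper toRight
  surjective_toRight : Surjective toRight

namespace MdfRefinement

section Step

variable {k S sk} {n : ℕ} {T : Scheme.{u}} {tS : T ⟶ S} {A W : MdfSeq k S sk n T tS}
  {i : Fin n} (R : MdfRefinement k S sk A W i.castSucc)

/-- The base change `X × □`. -/
abbrev boxProd : Scheme.{u} := pullback (R.XS ≫ sk) (boxToSpec k)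

/-- The morphism `X × □ → V_{i,∞} × □`. -/
def boxToLeft : R.boxProd ⟶ pullback (A.VinfS i.castSucc ≫ sk) (boxToSpec k) :=
  pullback.lift (pullback.fst _ _ ≫ R.toLeft) (pullback.snd _ _) (by
    rw [Category.assoc, ← Category.assoc R.toLeft, R.toLeft_comp, pullback.condition])

/-- The morphism `X × □ → W_{i,∞} × □`. -/
def boxToRight : R.boxProd ⟶ pullback (W.VinfS i.castSucc ≫ sk) (boxToSpec k) :=
  pullback.lift (pullback.fst _ _ ≫ R.toRight) (pullback.snd _ _) (by
    rw [Category.assoc, ← Category.assoc R.toRight, R.toRight_comp, pullback.condition])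

lemma isPullback_boxToRight :
    IsPullback R.boxToRight (pullback.fst _ _) (pullback.fst _ _) R.toRight := by
  refine IsPullback.of_right (h₁₂ := pullback.snd _ _) (h₂₂ := W.VinfS i.castSucc ≫ sk)
    (v₁₃ := boxToSpec k) ?_ (pullback.lift_fst _ _ _) (IsPullback.of_hasPullback _ _).flip
  rw [boxToRight, pullback.lift_snd, ← Category.assoc, R.toRight_comp]
  exact (IsPullback.of_hasPullback _ _).flip

instance : IsProper R.boxToRight :=
  MorphismProperty.of_isPullback R.isPullback_boxToRight.flip R.isProper_toRight

instance : Surjective R.boxToRight :=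
  MorphismProperty.of_isPullback R.isPullback_boxToRight.flip R.surjective_toRight

instance : IsProper (A.g i) := A.gproper i

/-- The fibre product over `X × □` of the base changes of `Vᵢ` and `Wᵢ`. -/
abbrev V : Scheme.{u} :=
  pullback (pullback.snd (A.g i) R.boxToLeft) (pullback.snd (W.g i) R.boxToRight)

/-- The structure morphism to `X × □`. -/
def g : R.V ⟶ R.boxProd := pullback.fst _ _ ≫ pullback.snd _ _

/-- The projection to `Vᵢ`. -/
def VToLeft : R.V ⟶ A.V i := pullback.fst _ _ ≫ pullback.fst _ _

/-- The projection to `Wᵢ`. -/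
def VToRight : R.V ⟶ W.V i := pullback.snd _ _ ≫ pullback.fst _ _

lemma VToLeft_g : R.VToLeft ≫ A.g i = R.g ≫ R.boxToLeft := by
  rw [VToLeft, g, Category.assoc, pullback.condition, Category.assoc]

lemma VToRight_g : R.VToRight ≫ W.g i = R.g ≫ R.boxToRight := by
  simp only [VToRight, g, Category.assoc, pullback.condition]

instance isProper_g : IsProper R.g := by
  unfold g
  infer_instance

instance isProper_VToRight : IsProper R.VToRight := by
  unfold VToRight
  infer_instance

lemma surjective_VToRight (hA : Surjective (A.g i)) : Surjective R.VToRight := by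
  unfold VToRight
  infer_instance

/-- The projection to `□`. -/
abbrev toBox : R.V ⟶ boxScheme k := R.g ≫ pullback.snd _ _

lemma VToLeft_toBox : R.VToLeft ≫ A.g i ≫ pullback.snd _ _ = R.toBox := by
  rw [← Category.assoc, VToLeft_g, Category.assoc, boxToLeft, pullback.lift_snd]

lemma VToRight_toBox : R.VToRight ≫ W.g i ≫ pullback.snd _ _ = R.toBox := by
  rw [← Category.assoc, VToRight_g, Category.assoc, boxToRight, pullback.lift_snd]

lemma VToLeft_fst : R.VToLeft ≫ A.g i ≫ pullback.fst _ _ =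
    R.g ≫ pullback.fst _ _ ≫ R.toLeft := by
  rw [← Category.assoc, VToLeft_g, Category.assoc, boxToLeft, pullback.lift_fst]

lemma VToRight_fst : R.VToRight ≫ W.g i ≫ pullback.fst _ _ =
    R.g ≫ pullback.fst _ _ ≫ R.toRight := by
  rw [← Category.assoc, VToRight_g, Category.assoc, boxToRight, pullback.lift_fst]

/-- The structure morphism to `S`. -/
def VS : R.V ⟶ S := R.g ≫ pullback.fst _ _ ≫ R.XS

lemma VToLeft_VS : R.VToLeft ≫ A.VS i = R.VS := by
  rw [← A.gS, VS]
  simpa only [Category.assoc, R.toLeft_comp] using R.VToLeft_fst =≫ A.VinfS i.castSucc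

lemma VToRight_VS : R.VToRight ≫ W.VS i = R.VS := by
  rw [← W.gS, VS]
  simpa only [Category.assoc, R.toRight_comp] using R.VToRight_fst =≫ W.VinfS i.castSucc

lemma isSeparated_VS : IsSeparated R.VS := by
  have := W.VSsep i
  rw [← VToRight_VS]
  infer_instance

lemma locallyOfFiniteType_VS : LocallyOfFiniteType R.VS := by
  have := W.VSlft i
  rw [← VToRight_VS]
  infer_instance

lemma quasiCompact_VS : QuasiCompact R.VS := by
  have := W.VSqc i
  rw [← VToRight_VS]
  infer_instance

/-- The inclusion of the generic fibre. -/
abbrev genFiber : pullback R.toBox (genMap k) ⟶ R.V := pullback.fst _ _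

instance : IsClosedImmersion (A.ι i) := A.ιclosed i

/-- The induced morphism of flat parts to that of `Vᵢ`. -/
def flToLeft : R.genFiber.image ⟶ A.Vfl i := flatLift R.VToLeft_toBox (A.lift_comm i)

/-- The induced morphism of flat parts to that of `Wᵢ`. -/
def flToRight : R.genFiber.image ⟶ W.Vfl i := flatLift R.VToRight_toBox (W.lift_comm i)

lemma flToLeft_ι : R.flToLeft ≫ A.ι i = R.genFiber.imageι ≫ R.VToLeft := flatLift_comp _ _

lemma flToRight_ι : R.flToRight ≫ W.ι i = R.genFiber.imageι ≫ R.VToRight := flatLift_comp _ _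

/-- The fibre at infinity of the flat part. -/
abbrev Vinf : Scheme.{u} := pullback (R.genFiber.imageι ≫ R.g ≫ pullback.snd _ _) (inftyMap k)

lemma flToLeft_toBox : R.flToLeft ≫ A.ι i ≫ A.g i ≫ pullback.snd _ _ =
    R.genFiber.imageι ≫ R.g ≫ pullback.snd _ _ := by
  rw [← Category.assoc, flToLeft_ι, Category.assoc, VToLeft_toBox]

lemma flToRight_toBox : R.flToRight ≫ W.ι i ≫ W.g i ≫ pullback.snd _ _ =
    R.genFiber.imageι ≫ R.g ≫ pullback.snd _ _ := by
  rw [← Category.assoc, flToRight_ι, Category.assoc, VToRight_toBox]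

/-- The induced morphism to `V_{i+1,∞}`. -/
def infToLeft : R.Vinf ⟶ A.Vinf i.succ :=
  (A.isPB i).lift (pullback.fst _ _ ≫ R.flToLeft) (pullback.snd _ _)
    (by rw [Category.assoc, flToLeft_toBox, pullback.condition])

/-- The induced morphism to `W_{i+1,∞}`. -/
def infToRight : R.Vinf ⟶ W.Vinf i.succ :=
  (W.isPB i).lift (pullback.fst _ _ ≫ R.flToRight) (pullback.snd _ _)
    (by rw [Category.assoc, flToRight_toBox, pullback.condition])

lemma infToLeft_pr₁ : R.infToLeft ≫ A.pr₁ i = pullback.fst _ _ ≫ R.flToLeft :=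
  (A.isPB i).lift_fst _ _ _

lemma infToRight_pr₁ : R.infToRight ≫ W.pr₁ i = pullback.fst _ _ ≫ R.flToRight :=
  (W.isPB i).lift_fst _ _ _

lemma infToLeft_pr₂ : R.infToLeft ≫ A.pr₂ i = pullback.snd _ _ :=
  (A.isPB i).lift_snd _ _ _

lemma infToRight_pr₂ : R.infToRight ≫ W.pr₂ i = pullback.snd _ _ :=
  (W.isPB i).lift_snd _ _ _

lemma isPullback_infToRight :
    IsPullback R.infToRight (pullback.fst _ _) (W.pr₁ i) R.flToRight := by
  refine IsPullback.of_right (h₁₂ := W.pr₂ i) (h₂₂ := W.ι i ≫ W.g i ≫ pullback.snd _ _)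
    (v₁₃ := inftyMap k) ?_ R.infToRight_pr₁ (W.isPB i).flip
  rw [infToRight_pr₂, flToRight_toBox]
  exact (IsPullback.of_hasPullback _ _).flip

/-- Pass from the stage `i - 1` to the stage `i`. -/
def next (hA : Surjective (A.g i)) : MdfRefinement k S sk A W i.succ where
  X := R.Vinf
  XS := pullback.fst _ _ ≫ R.genFiber.imageι ≫ R.VS
  toLeft := R.infToLeft
  toRight := R.infToRight
  toLeft_comp := by
    rw [A.VinfS_succ, ← R.VToLeft_VS, ← Category.assoc, infToLeft_pr₁, Category.assoc,
      ← Category.assoc R.flToLeft, flToLeft_ι, Category.assoc]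
  toRight_comp := by
    rw [W.VinfS_succ, ← R.VToRight_VS, ← Category.assoc, infToRight_pr₁, Category.assoc,
      ← Category.assoc R.flToRight, flToRight_ι, Category.assoc]
  isProper_toRight :=
    MorphismProperty.of_isPullback R.isPullback_infToRight.flip (isProper_flatLift _ _)
  surjective_toRight :=
    have := R.surjective_VToRight hA
    MorphismProperty.of_isPullback R.isPullback_infToRight.flip
      (surjective_flatLift _ _ (W.lift_dom i))

end Step

variable {k S sk} {n : ℕ} {T : Scheme.{u}} {tS : T ⟶ S} (A W : MdfSeq k S sk n T tS)

/-- The initial stage, given by `T` itself. -/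
def initial : MdfRefinement k S sk A W 0 where
  X := T
  XS := tS
  toLeft := eqToHom A.base_eq.symm
  toRight := eqToHom W.base_eq.symm
  toLeft_comp := by rw [A.baseS_eq, eqToHom_trans_assoc, eqToHom_refl, Category.id_comp]
  toRight_comp := by rw [W.baseS_eq, eqToHom_trans_assoc, eqToHom_refl, Category.id_comp]
  isProper_toRight := inferInstance
  surjective_toRight := inferInstance

variable {A}

/-- The recursively constructed stages of the common refinement. -/
def stage (hA : ∀ i, Surjective (A.g i)) (i : Fin (n + 1)) : MdfRefinement k S sk A W i :=
  Fin.induction (motive := fun i ↦ MdfRefinement k S sk A W i) (initial A W)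
    (fun i R ↦ R.next (hA i)) i

/-- The common refinement of a principal and an arbitrary Mdf-sequence. -/
def seq (hA : ∀ i, Surjective (A.g i)) : MdfSeq k S sk n T tS where
  Vinf i := (stage W hA i).X
  VinfS i := (stage W hA i).XS
  base_eq := rfl
  baseS_eq := (Category.id_comp _).symm
  V i := (stage W hA i.castSucc).V
  VS i := (stage W hA i.castSucc).VS
  VSsep i := (stage W hA i.castSucc).isSeparated_VS
  VSlft i := (stage W hA i.castSucc).locallyOfFiniteType_VS
  VSqc i := (stage W hA i.castSucc).quasiCompact_VS
  g i := (stage W hA i.castSucc).g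
  gS _ := rfl
  gproper i := (stage W hA i.castSucc).isProper_g
  Vfl i := (stage W hA i.castSucc).genFiber.image
  ι i := (stage W hA i.castSucc).genFiber.imageι
  ιclosed _ := inferInstance
  lift i := (stage W hA i.castSucc).genFiber.toImage
  lift_comm i := (stage W hA i.castSucc).genFiber.toImage_imageι
  lift_dom i := toImage_app_injective_opens (stage W hA i.castSucc).genFiber
  pr₁ i := pullback.fst ((stage W hA i.castSucc).genFiber.imageι ≫ _) (inftyMap k)
  pr₂ i := pullback.snd ((stage W hA i.castSucc).genFiber.imageι ≫ _) (inftyMap k)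
  isPB _ := IsPullback.of_hasPullback _ _
  VinfS_succ _ := rfl

/-- The projection of the common refinement to the principal Mdf-sequence. -/
def homLeft (hA : ∀ i, Surjective (A.g i)) : MdfHom k S sk (seq W hA) A where
  ψ i := (stage W hA i).toLeft
  ψS i := (stage W hA i).toLeft_comp
  ψ0 := rfl
  φ i := (stage W hA i.castSucc).VToLeft
  φfl i := (stage W hA i.castSucc).flToLeft
  φfl_comm i := (stage W hA i.castSucc).flToLeft_ι
  comm_fst i := (stage W hA i.castSucc).VToLeft_fst
  comm_snd i := (stage W hA i.castSucc).VToLeft_toBox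
  ψ_pr₁ i := (stage W hA i.castSucc).infToLeft_pr₁
  ψ_pr₂ i := (stage W hA i.castSucc).infToLeft_pr₂

/-- The projection of the common refinement to the arbitrary Mdf-sequence. -/
def homRight (hA : ∀ i, Surjective (A.g i)) : MdfHom k S sk (seq W hA) W where
  ψ i := (stage W hA i).toRight
  ψS i := (stage W hA i).toRight_comp
  ψ0 := rfl
  φ i := (stage W hA i.castSucc).VToRight
  φfl i := (stage W hA i.castSucc).flToRight
  φfl_comm i := (stage W hA i.castSucc).flToRight_ι
  comm_fst i := (stage W hA i.castSucc).VToRight_fst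
  comm_snd i := (stage W hA i.castSucc).VToRight_toBox
  ψ_pr₁ i := (stage W hA i.castSucc).infToRight_pr₁
  ψ_pr₂ i := (stage W hA i.castSucc).infToRight_pr₂

end MdfRefinement

/-- Fix a field `k`, a noetherian separated base scheme `S` over `k` and a
separated `S`-scheme `T` of finite type.  Let `(Vᵢ)` be a principal Mdf-sequence over `T` and
`(Wᵢ)` an arbitrary Mdf-sequence over `T` of the same length `n`.  Then there exists an
Mdf-sequence `(Vᵢ′)` over `T` together with morphisms of Mdf-sequences `(Vᵢ′) → (Vᵢ)` and
`(Vᵢ′) → (Wᵢ)` such that the induced morphisms `V′_{i,∞} → W_{i,∞}` are surjective for all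
`1 ≤ i ≤ n`. -/
theorem stmt6 [IsNoetherian S] (hSsep : IsSeparated sk)
    (T : Scheme.{u}) (tS : T ⟶ S)
    (hTsep : IsSeparated tS) (hTlft : LocallyOfFiniteType tS) (hTqc : QuasiCompact tS)
    (n : ℕ) (A : MdfSeq k S sk n T tS) (hA : A.Principal k S sk)
    (W : MdfSeq k S sk n T tS) :
    ∃ (A' : MdfSeq k S sk n T tS) (_ : MdfHom k S sk A' A) (β : MdfHom k S sk A' W),
      ∀ i : Fin n, Function.Surjective (β.ψ i.succ).base := by
  have hA' : ∀ i, Surjective (A.g i) := fun i ↦ ⟨hA i⟩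
  exact ⟨MdfRefinement.seq W hA', MdfRefinement.homLeft W hA', MdfRefinement.homRight W hA',
    fun i ↦ (MdfRefinement.stage W hA' i.succ).surjective_toRight.surj⟩

end
end
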